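/- arXiv:math/9811058 — 2 statements merged into one kernel-verified Lean document; each statement's English description precedes it below -/
import Mathlib

section
/- Let p be a prime, n a natural number, and λ_1 ≥ ⋯ ≥ λ_t a partition of n. Let U be the abelian p-group ℤ/p^{λ_1}ℤ ⊕ ⋯ ⊕ ℤ/p^{λ_t}ℤ and let V be the R_n-module R_n/(T^{λ_1}) ⊕ ⋯ ⊕ R_n/(T^{λ_t}), where R_n = (ℤ/pℤ)[X]/(X^n) and T is the image of X. Then there exists a bijection between: (i) the set of isomorphism classes of ℤ-bilinear multiplications μ : U × U → U satisfying p·μ(x,y) = 0 for all x,y ∈ U (two multiplications μ₁, μ₂ being isomorphic when there is an additive automorphism α of U with α(μ₁(x,y)) = μ₂(α(x),α(y)) for all x,y), and (ii) the set of isomorphism classes of R_n-bilinear multiplications ν : V × V → V satisfying T•ν(x,y) = 0 for all x,y ∈ V (with isomorphism defined via R_n-module automorphisms of V analogously). -/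
open Polynomial

/-- The ring `R_n = (ℤ/pℤ)[X]/(Xⁿ)`. -/
noncomputable abbrev Rn (p n : ℕ) : Type :=
  Polynomial (ZMod p) ⧸ Ideal.span {(X : Polynomial (ZMod p)) ^ n}

/-- `T`, the image of `X` in `R_n`. -/
noncomputable def Tn (p n : ℕ) : Rn p n := Ideal.Quotient.mk _ X

/-- The abelian group `U = ℤ/p^{λ₁}ℤ ⊕ ⋯ ⊕ ℤ/p^{λ_t}ℤ`. -/
abbrev Umod (p t : ℕ) (lam : Fin t → ℕ) : Type := ∀ j : Fin t, ZMod (p ^ lam j)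

/-- The `R_n`-module `V = R_n/(T^{λ₁}) ⊕ ⋯ ⊕ R_n/(T^{λ_t})`. -/
noncomputable abbrev Vmod (p n t : ℕ) (lam : Fin t → ℕ) : Type :=
  ∀ j : Fin t, Rn p n ⧸ Submodule.span (Rn p n) {Tn p n ^ lam j}

/-- `ℤ`-bilinear (i.e. biadditive) multiplications on `U` killed by `p`. -/
def MulU (p t : ℕ) (lam : Fin t → ℕ) : Type :=
  { μ : Umod p t lam →+ Umod p t lam →+ Umod p t lam // ∀ x y, p • μ x y = 0 }

/-- `R_n`-bilinear multiplications on `V` killed by `T`. -/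
noncomputable def MulV (p n t : ℕ) (lam : Fin t → ℕ) : Type :=
  { ν : Vmod p n t lam →ₗ[Rn p n] Vmod p n t lam →ₗ[Rn p n] Vmod p n t lam //
      ∀ x y, Tn p n • ν x y = 0 }

/-- Isomorphism of multiplications on `U`, via additive automorphisms of `U`. -/
def relU (p t : ℕ) (lam : Fin t → ℕ) (μ₁ μ₂ : MulU p t lam) : Prop :=
  ∃ α : Umod p t lam ≃+ Umod p t lam, ∀ x y, α (μ₁.1 x y) = μ₂.1 (α x) (α y)

/-- Isomorphism of multiplications on `V`, via `R_n`-module automorphisms of `V`. -/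
def relV (p n t : ℕ) (lam : Fin t → ℕ) (ν₁ ν₂ : MulV p n t lam) : Prop :=
  ∃ α : Vmod p n t lam ≃ₗ[Rn p n] Vmod p n t lam, ∀ x y, α (ν₁.1 x y) = ν₂.1 (α x) (α y)

structure Pres {k : Type} [Field k] {t : ℕ} (lam : Fin t → ℕ) {R M : Type} [CommRing R]
    [AddCommMonoid M] [Module R M] (π : R) (φ : R →+* k) (e : Fin t → M) : Prop where
  pos : ∀ j, 1 ≤ lam j
  surj : Function.Surjective φ
  ker : ∀ r, φ r = 0 ↔ π ∣ r
  span : ∀ x : M, ∃ r : Fin t → R, x = ∑ j, r j • e j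
  rel : ∀ r : Fin t → R, ∑ j, r j • e j = 0 ↔ ∀ j, π ^ lam j ∣ r j
  cancel : ∀ j m r, m ≤ lam j → π ^ lam j ∣ π ^ m * r → π ^ (lam j - m) ∣ r

def MulM (R M : Type) [CommRing R] [AddCommMonoid M] [Module R M] (π : R) : Type :=
  { ν : M →ₗ[R] M →ₗ[R] M // ∀ x y, π • ν x y = 0 }

def relM (R M : Type) [CommRing R] [AddCommMonoid M] [Module R M] (π : R)
    (ν₁ ν₂ : MulM R M π) : Prop :=
  ∃ α : M ≃ₗ[R] M, ∀ x y, α (ν₁.1 x y) = ν₂.1 (α x) (α y)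

structure GG {k : Type} [Field k] {t : ℕ} (lam : Fin t → ℕ)
    (A B : (Fin t → k) →ₗ[k] (Fin t → k)) : Prop where
  surj : Function.Surjective A
  hA : ∀ i j, lam j < lam i → A (Pi.single j 1) i = 0
  hB : ∀ i j, lam i < lam j → B (Pi.single j 1) i = 0
  hAB : ∀ i j, lam i = lam j → A (Pi.single j 1) i = B (Pi.single j 1) i

def relC (k : Type) [Field k] {t : ℕ} (lam : Fin t → ℕ)
    (c₁ c₂ : (Fin t → k) →ₗ[k] (Fin t → k) →ₗ[k] (Fin t → k)) : Prop :=
  ∃ A B, GG lam A B ∧ ∀ x y, B (c₁ x y) = c₂ (A x) (A y)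

namespace Pres

variable {k : Type} [Field k] {t : ℕ} {lam : Fin t → ℕ} {R M : Type} [CommRing R]
    [AddCommGroup M] [Module R M] {π : R} {φ : R →+* k} {e : Fin t → M}

theorem eq_iff (h : Pres lam π φ e) (r s : Fin t → R) :
    ∑ j, r j • e j = ∑ j, s j • e j ↔ ∀ j, π ^ lam j ∣ r j - s j := by
  rw [← h.rel, ← sub_eq_zero, ← Finset.sum_sub_distrib]
  simp only [sub_smul]

theorem phi_eq (h : Pres lam π φ e) (r s : R) : φ r = φ s ↔ π ∣ r - s := by
  rw [← h.ker, map_sub, sub_eq_zero]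

theorem lift_lin (h : Pres lam π φ e) (m : Fin t → M) (hm : ∀ j, π ^ lam j • m j = 0) :
    ∃ f : M →ₗ[R] M, ∀ r : Fin t → R, f (∑ j, r j • e j) = ∑ j, r j • m j := by
  choose c hc using h.span
  have key : ∀ r : Fin t → R, ∑ j, c (∑ j, r j • e j) j • m j = ∑ j, r j • m j := by
    intro r
    have h1 := (h.eq_iff _ _).1 (hc (∑ j, r j • e j))
    rw [← sub_eq_zero, ← Finset.sum_sub_distrib]
    refine Finset.sum_eq_zero fun j _ => ?_
    obtain ⟨d, hd⟩ := h1 j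
    have : c (∑ j, r j • e j) j - r j = -d * π ^ lam j := by linear_combination - hd
    rw [← sub_smul, this, mul_smul, hm, smul_zero]
  refine ⟨{ toFun := fun x => ∑ j, c x j • m j, map_add' := ?_, map_smul' := ?_ }, key⟩
  · intro x y
    have : x + y = ∑ j, (c x j + c y j) • e j := by
      simp only [add_smul, Finset.sum_add_distrib]; rw [← hc, ← hc]
    conv_lhs => rw [this]
    rw [key]
    simp only [add_smul, Finset.sum_add_distrib]
  · intro a x
    have : a • x = ∑ j, (a * c x j) • e j := by
      simp only [mul_smul, ← Finset.smul_sum]; rw [← hc]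
    conv_lhs => rw [this]
    rw [key]
    simp only [mul_smul, ← Finset.smul_sum, RingHom.id_apply]

theorem exists_q (h : Pres lam π φ e) :
    ∃ q : M → Fin t → k, ∀ (r : Fin t → R) j, q (∑ j, r j • e j) j = φ (r j) := by
  choose c hc using h.span
  refine ⟨fun x j => φ (c x j), fun r j => ?_⟩
  have h1 := (h.eq_iff _ _).1 (hc (∑ j, r j • e j)) j
  exact ((h.phi_eq _ _).2 ((dvd_pow_self π (by have := h.pos j; omega)).trans h1)).symm

theorem exists_i (h : Pres lam π φ e) :
    ∃ ι : (Fin t → k) → M, ∀ (r : Fin t → R),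
      ι (fun j => φ (r j)) = ∑ j, (π ^ (lam j - 1) * r j) • e j := by
  choose s hs using h.surj
  refine ⟨fun w => ∑ j, (π ^ (lam j - 1) * s (w j)) • e j, fun r => ?_⟩
  rw [h.eq_iff]
  intro j
  have h1 : π ∣ s (φ (r j)) - r j := (h.phi_eq _ _).1 (hs _)
  rw [← mul_sub]
  have := mul_dvd_mul_left (π ^ (lam j - 1)) h1
  rwa [← pow_succ, Nat.sub_add_cancel (h.pos j)] at this

theorem W_lift (h : Pres lam π φ e) (w : Fin t → k) : ∃ r : Fin t → R, w = fun j => φ (r j) := by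
  choose s hs using h.surj
  exact ⟨fun j => s (w j), by ext j; simp [hs]⟩

end Pres

/-- All the data needed. -/
structure QI {k : Type} [Field k] {t : ℕ} (lam : Fin t → ℕ) {R M : Type} [CommRing R]
    [AddCommGroup M] [Module R M] (π : R) (φ : R →+* k) (q : M → Fin t → k)
    (ι : (Fin t → k) → M) : Prop where
  phi : Function.Surjective φ
  qadd : ∀ x y, q (x + y) = q x + q y
  qsmul : ∀ (r : R) x, q (r • x) = φ r • q x
  qsurj : Function.Surjective q
  qker : ∀ x, q x = 0 → ∃ y, x = π • y
  iadd : ∀ x y, ι (x + y) = ι x + ι y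
  ismul : ∀ (r : R) x, ι (φ r • x) = r • ι x
  iinj : Function.Injective ι
  itor : ∀ w, π • ι w = 0
  irange : ∀ x, π • x = 0 → ∃ w, ι w = x
  autos : ∀ α : M ≃ₗ[R] M, ∃ A B, GG lam A B ∧ (∀ x, q (α x) = A (q x)) ∧
    ∀ w, α (ι w) = ι (B w)
  autos' : ∀ A B, GG lam A B → ∃ α : M ≃ₗ[R] M, (∀ x, q (α x) = A (q x)) ∧
    ∀ w, α (ι w) = ι (B w)

theorem Pres.exists_QI {k : Type} [Field k] {t : ℕ} {lam : Fin t → ℕ} {R M : Type} [CommRing R]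
    [AddCommGroup M] [Module R M] {π : R} {φ : R →+* k} {e : Fin t → M}
    (h : Pres lam π φ e) : ∃ q ι, QI (M := M) lam π φ q ι := by
  obtain ⟨q, hq⟩ := h.exists_q
  obtain ⟨ι, hι⟩ := h.exists_i
  have hπ : φ π = 0 := (h.ker _).2 dvd_rfl
  have qadd : ∀ x y, q (x + y) = q x + q y := by
    intro x y
    obtain ⟨r, rfl⟩ := h.span x
    obtain ⟨s, rfl⟩ := h.span y
    ext j
    rw [← Finset.sum_add_distrib]
    simp only [← add_smul, Pi.add_apply]
    rw [hq (fun j => r j + s j), hq, hq, map_add]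
  have qsmul : ∀ (r : R) x, q (r • x) = φ r • q x := by
    intro a x
    obtain ⟨r, rfl⟩ := h.span x
    ext j
    rw [Finset.smul_sum]
    simp only [← mul_smul, Pi.smul_apply, smul_eq_mul]
    rw [hq (fun j => a * r j), hq, map_mul]
  have qsurj : Function.Surjective q := by
    intro w
    obtain ⟨r, rfl⟩ := h.W_lift w
    exact ⟨∑ j, r j • e j, by ext j; rw [hq]⟩
  have qker : ∀ x, q x = 0 → ∃ y, x = π • y := by
    intro x hx
    obtain ⟨r, rfl⟩ := h.span x
    have : ∀ j, π ∣ r j := fun j => by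
      rw [← h.ker, ← hq r j, hx]; rfl
    choose s hs using this
    refine ⟨∑ j, s j • e j, ?_⟩
    rw [Finset.smul_sum]
    refine Finset.sum_congr rfl fun j _ => ?_
    rw [← mul_smul, ← hs]
  have iadd : ∀ x y, ι (x + y) = ι x + ι y := by
    intro x y
    obtain ⟨r, rfl⟩ := h.W_lift x
    obtain ⟨s, rfl⟩ := h.W_lift y
    have : ((fun j => φ (r j)) + fun j => φ (s j)) = fun j => φ (r j + s j) := by
      ext j; simp
    rw [this, hι, hι, hι, ← Finset.sum_add_distrib]
    simp only [mul_add, add_smul]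
  have ismul : ∀ (r : R) x, ι (φ r • x) = r • ι x := by
    intro a x
    obtain ⟨r, rfl⟩ := h.W_lift x
    have : (φ a • fun j => φ (r j)) = fun j => φ (a * r j) := by
      ext j; simp
    rw [this, hι, hι, Finset.smul_sum]
    refine Finset.sum_congr rfl fun j _ => ?_
    rw [← mul_smul]; ring_nf
  have cancel1 : ∀ j a, π ^ lam j ∣ π ^ (lam j - 1) * a → π ∣ a := by
    intro j a ha
    have := h.cancel j _ _ (by omega) ha
    have hh := h.pos j
    rwa [show lam j - (lam j - 1) = 1 by omega, pow_one] at this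
  have iinj : Function.Injective ι := by
    intro x y hxy
    obtain ⟨r, rfl⟩ := h.W_lift x
    obtain ⟨s, rfl⟩ := h.W_lift y
    rw [hι, hι, h.eq_iff] at hxy
    ext j
    have := hxy j
    rw [← mul_sub] at this
    exact (h.phi_eq _ _).2 (cancel1 j _ this)
  have itor : ∀ w, π • ι w = 0 := by
    intro w
    rw [← ismul, hπ, zero_smul]
    have := iadd 0 0
    simpa using this
  have irange : ∀ x, π • x = 0 → ∃ w, ι w = x := by
    intro x hx
    obtain ⟨r, rfl⟩ := h.span x
    rw [Finset.smul_sum] at hx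
    simp only [← mul_smul] at hx
    rw [h.rel (fun j => π * r j)] at hx
    have : ∀ j, π ^ (lam j - 1) ∣ r j := fun j =>
      h.cancel j 1 _ (h.pos j) (by simpa using hx j)
    choose s hs using this
    exact ⟨fun j => φ (s j), by rw [hι]; simp only [← hs]⟩
  have esum : ∀ j, ∑ i, (Pi.single j (1 : R) : Fin t → R) i • e i = e j := by
    intro j
    rw [Finset.sum_eq_single j] <;> simp +contextual
  have qe : ∀ j, q (e j) = Pi.single j 1 := by
    intro j
    ext i
    rw [← esum j, hq, Pi.single_apply, Pi.single_apply]
    split_ifs <;> simp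
  have ie : ∀ j, ι (Pi.single j 1) = π ^ (lam j - 1) • e j := by
    intro j
    have : (Pi.single j (1 : k) : Fin t → k) =
        fun i => φ ((Pi.single j (1 : R) : Fin t → R) i) := by
      ext i; rw [Pi.single_apply, Pi.single_apply]
      split_ifs <;> simp
    rw [this, hι]
    simp only [mul_smul]
    rw [Finset.sum_eq_single j] <;> simp +contextual
  have etor : ∀ j m, lam j ≤ m → π ^ m • e j = 0 := by
    intro j m hm
    rw [← esum j, Finset.smul_sum]
    simp only [← mul_smul]
    rw [h.rel (fun i => π ^ m * (Pi.single j (1 : R) : Fin t → R) i)]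
    intro i
    by_cases hij : i = j
    · subst hij; exact Dvd.dvd.mul_right (pow_dvd_pow _ hm) _
    · simp [hij]
  refine ⟨q, ι, h.surj, qadd, qsmul, qsurj, qker, iadd, ismul, iinj, itor, irange, ?_, ?_⟩
  · intro α
    choose s hs using qsurj
    have hA : ∀ x, q (α x) = q (α (s (q x))) := by
      intro x
      have h1 : q (x - s (q x)) = 0 := by
        have := qadd (x - s (q x)) (s (q x))
        rw [sub_add_cancel, hs] at this
        simpa using this
      obtain ⟨y, hy⟩ := qker _ h1
      have : x = s (q x) + π • y := by rw [← hy]; abel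
      conv_lhs => rw [this]
      rw [map_add, qadd, map_smul, qsmul, hπ, zero_smul, add_zero]
    have hB : ∀ w, ∃ w', ι w' = α (ι w) := fun w =>
      irange _ (by rw [← map_smul, itor, map_zero])
    choose B hB using hB
    let A' : (Fin t → k) →ₗ[k] (Fin t → k) :=
      { toFun := fun w => q (α (s w))
        map_add' := by
          intro x y
          rw [← qadd, ← map_add, hA (s x + s y), qadd, hs, hs]
        map_smul' := by
          intro a x
          obtain ⟨r, rfl⟩ := h.surj a
          rw [RingHom.id_apply, ← qsmul, ← map_smul, hA (r • s x), qsmul, hs] }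
    let B' : (Fin t → k) →ₗ[k] (Fin t → k) :=
      { toFun := B
        map_add' := by
          intro x y
          apply iinj
          rw [iadd, hB, hB, hB, iadd, map_add]
        map_smul' := by
          intro a x
          obtain ⟨r, rfl⟩ := h.surj a
          apply iinj
          rw [RingHom.id_apply, ismul, hB, hB, ismul, map_smul] }
    have hA' : ∀ x, q (α x) = A' (q x) := hA
    have hB' : ∀ w, α (ι w) = ι (B' w) := fun w => (hB w).symm
    have : ∀ j, ∃ r : Fin t → R, α (e j) = ∑ i, r i • e i := fun j => h.span _
    choose a ha using this
    have hAe : ∀ i j, A' (Pi.single j 1) i = φ (a j i) := by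
      intro i j
      rw [← qe, ← hA', ha, hq]
    have hdiv : ∀ i j, π ^ lam i ∣ π ^ lam j * a j i := by
      intro i j
      have : π ^ lam j • α (e j) = 0 := by
        rw [← map_smul, etor j _ le_rfl, map_zero]
      rw [ha, Finset.smul_sum] at this
      simp only [← mul_smul] at this
      exact (h.rel (fun i => π ^ lam j * a j i)).1 this i
    have hBe : ∀ i j, ∃ b, B' (Pi.single j 1) i = φ b ∧
        π ^ lam i ∣ π ^ (lam i - 1) * b - π ^ (lam j - 1) * a j i := by
      intro i j
      obtain ⟨b, hb⟩ := h.W_lift (B' (Pi.single j 1))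
      refine ⟨b i, by rw [hb], ?_⟩
      have h1 := hB' (Pi.single j 1)
      rw [hb, hι, ie, map_smul, ha, Finset.smul_sum] at h1
      simp only [← mul_smul] at h1
      exact (h.eq_iff (fun i => π ^ (lam i - 1) * b i)
        (fun i => π ^ (lam j - 1) * a j i)).1 h1.symm i
    refine ⟨A', B', ⟨?_, ?_, ?_, ?_⟩, hA', hB'⟩
    · intro w
      refine ⟨q (α.symm (s w)), ?_⟩
      rw [← hA', LinearEquiv.apply_symm_apply, hs]
    · intro i j hij
      rw [hAe, h.ker]
      exact (dvd_pow_self π (by omega)).trans (h.cancel i _ _ hij.le (hdiv i j))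
    · intro i j hij
      obtain ⟨b, hb, hb2⟩ := hBe i j
      rw [hb, h.ker]
      apply cancel1 i
      have : π ^ lam i ∣ π ^ (lam j - 1) * a j i :=
        Dvd.dvd.mul_right (pow_dvd_pow _ (by omega)) _
      simpa using dvd_add hb2 this
    · intro i j hij
      obtain ⟨b, hb, hb2⟩ := hBe i j
      rw [hb, hAe, eq_comm, h.phi_eq]
      apply cancel1 i
      rw [mul_sub]
      rwa [← hij] at hb2
  · intro A B hG
    choose s hs using h.surj
    let a : Fin t → Fin t → R := fun j i =>
      if lam i ≤ lam j then s (A (Pi.single j 1) i)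
      else π ^ (lam i - lam j) * s (B (Pi.single j 1) i)
    have haA : ∀ i j, φ (a j i) = A (Pi.single j 1) i := by
      intro i j
      simp only [a]
      split_ifs with hij
      · exact hs _
      · rw [hG.hA i j (by omega), h.ker]
        exact Dvd.dvd.mul_right (dvd_pow_self π (by omega)) _
    have haB : ∀ i j, π ^ lam i ∣ π ^ (lam j - 1) * a j i -
        π ^ (lam i - 1) * s (B (Pi.single j 1) i) := by
      intro i j
      have hi := h.pos i
      have hj := h.pos j
      rcases lt_trichotomy (lam i) (lam j) with hij | hij | hij
      · refine dvd_sub (Dvd.dvd.mul_right (pow_dvd_pow _ (by omega)) _) ?_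
        have : π ∣ s (B (Pi.single j 1) i) := by rw [← h.ker, hs, hG.hB i j hij]
        have := mul_dvd_mul_left (π ^ (lam i - 1)) this
        rwa [← pow_succ, Nat.sub_add_cancel hi] at this
      · simp only [a, if_pos hij.le, hG.hAB i j hij, hij, sub_self, dvd_zero]
      · simp only [a, if_neg (not_le.2 hij)]
        rw [← mul_assoc, ← pow_add, show lam j - 1 + (lam i - lam j) = lam i - 1 by omega,
          sub_self]
        exact dvd_zero _
    obtain ⟨f, hf⟩ := h.lift_lin (fun j => ∑ i, a j i • e i) (by
      intro j
      rw [Finset.smul_sum]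
      simp only [← mul_smul]
      rw [h.rel (fun i => π ^ lam j * a j i)]
      intro i
      simp only [a]
      split_ifs with hij
      · exact Dvd.dvd.mul_right (pow_dvd_pow _ hij) _
      · rw [← mul_assoc, ← pow_add]
        exact Dvd.dvd.mul_right (pow_dvd_pow _ (by omega)) _)
    have hf' : ∀ r : Fin t → R, f (∑ j, r j • e j) = ∑ i, (∑ j, r j * a j i) • e i := by
      intro r
      rw [hf]
      simp only [Finset.smul_sum, Finset.sum_smul, mul_smul]
      rw [Finset.sum_comm]
    have Lsum : ∀ (L : (Fin t → k) →ₗ[k] (Fin t → k)) w i,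
        L w i = ∑ j, w j * L (Pi.single j 1) i := by
      intro L w i
      conv_lhs => rw [pi_eq_sum_univ' w]
      simp [map_sum, Finset.sum_apply]
    have hfq : ∀ x, q (f x) = A (q x) := by
      intro x
      obtain ⟨r, rfl⟩ := h.span x
      ext i
      rw [hf', hq (fun i => ∑ j, r j * a j i), Lsum, map_sum]
      refine Finset.sum_congr rfl fun j _ => ?_
      rw [hq, map_mul, haA]
    have hfi : ∀ w, f (ι w) = ι (B w) := by
      intro w
      obtain ⟨r, rfl⟩ := h.W_lift w
      have : B (fun j => φ (r j)) = fun i => φ (∑ j, r j * s (B (Pi.single j 1) i)) := by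
        ext i
        rw [Lsum, map_sum]
        simp only [map_mul, hs]
      rw [this, hι, hι, hf' (fun j => π ^ (lam j - 1) * r j),
        h.eq_iff (fun i => ∑ j, π ^ (lam j - 1) * r j * a j i)
          (fun i => π ^ (lam i - 1) * ∑ j, r j * s (B (Pi.single j 1) i))]
      intro i
      rw [Finset.mul_sum, ← Finset.sum_sub_distrib]
      refine Finset.dvd_sum fun j _ => ?_
      have := Dvd.dvd.mul_left (haB i j) (r j)
      convert this using 1
      ring
    have hsurj : Function.Surjective f := by
      have step : ∀ m : ℕ, ∀ x, ∃ y z, x = f y + π ^ m • z := by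
        intro m
        induction m with
        | zero => intro x; exact ⟨0, x, by simp⟩
        | succ m ih =>
          intro x
          obtain ⟨y, z, hyz⟩ := ih x
          obtain ⟨w, hw⟩ := hG.surj (q z)
          obtain ⟨u, rfl⟩ := qsurj w
          rw [← hfq] at hw
          have h1 : q (z - f u) = 0 := by
            have := qadd (z - f u) (f u)
            rw [sub_add_cancel, hw] at this
            simpa using this
          obtain ⟨v, hv⟩ := qker _ h1
          refine ⟨y + π ^ m • u, v, ?_⟩
          rw [hyz, pow_succ, mul_smul, ← hv, map_add, map_smul, smul_sub]
          abel
      intro x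
      obtain ⟨y, z, hyz⟩ := step (∑ j, lam j) x
      refine ⟨y, ?_⟩
      obtain ⟨r, rfl⟩ := h.span z
      rw [hyz, left_eq_add, Finset.smul_sum]
      refine Finset.sum_eq_zero fun j _ => ?_
      rw [smul_comm, etor j _ (Finset.single_le_sum (fun _ _ => Nat.zero_le _) (Finset.mem_univ j)),
        smul_zero]
    haveI : Module.Finite R M := by
      refine Module.Finite.of_surjective (Fintype.linearCombination R e) ?_
      intro x
      obtain ⟨r, rfl⟩ := h.span x
      exact ⟨r, by simp [Fintype.linearCombination_apply]⟩
    have hinj := OrzechProperty.injective_of_surjective_endomorphism f hsurj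
    exact ⟨LinearEquiv.ofBijective f ⟨hinj, hsurj⟩, hfq, hfi⟩

theorem QI.equiv {k : Type} [Field k] {t : ℕ} {lam : Fin t → ℕ} {R M : Type} [CommRing R]
    [AddCommGroup M] [Module R M] {π : R} {φ : R →+* k} {q : M → Fin t → k}
    {ι : (Fin t → k) → M} (h : QI lam π φ q ι) :
    Nonempty (Quot (relC k lam) ≃ Quot (relM R M π)) := by
  let F : ((Fin t → k) →ₗ[k] (Fin t → k) →ₗ[k] (Fin t → k)) → MulM R M π := fun c =>
    ⟨LinearMap.mk₂ R (fun x y => ι (c (q x) (q y)))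
      (by intros; simp only [h.qadd, h.iadd, map_add, LinearMap.add_apply])
      (by intros; simp only [h.qsmul, h.ismul, map_smul, LinearMap.smul_apply])
      (by intros; simp only [h.qadd, h.iadd, map_add])
      (by intros; simp only [h.qsmul, h.ismul, map_smul]),
      fun x y => h.itor _⟩
  have hF : ∀ c x y, (F c).1 x y = ι (c (q x) (q y)) := fun c x y => rfl
  have hbij : Function.Bijective F := by
    constructor
    · intro c c' hcc
      refine LinearMap.ext fun x => LinearMap.ext fun y => ?_
      obtain ⟨x, rfl⟩ := h.qsurj x
      obtain ⟨y, rfl⟩ := h.qsurj y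
      apply h.iinj
      rw [← hF, ← hF, hcc]
    · rintro ⟨ν, hν⟩
      choose s hs using h.qsurj
      have : ∀ x y, ∃ w, ι w = ν (s x) (s y) := fun x y => h.irange _ (hν _ _)
      choose c hc using this
      have hs' : ∀ x, ∃ y, x = s (q x) + π • y := by
        intro x
        have h1 : q (x - s (q x)) = 0 := by
          have := h.qadd (x - s (q x)) (s (q x))
          rw [sub_add_cancel, hs] at this
          simpa using this
        obtain ⟨y, hy⟩ := h.qker _ h1
        exact ⟨y, by rw [← hy]; abel⟩
      have key : ∀ x y, ι (c (q x) (q y)) = ν x y := by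
        intro x y
        rw [hc]
        obtain ⟨u, hu⟩ := hs' x
        obtain ⟨v, hv⟩ := hs' y
        conv_rhs => rw [hu, hv]
        simp [hν]
      let c' : (Fin t → k) →ₗ[k] (Fin t → k) →ₗ[k] (Fin t → k) :=
        LinearMap.mk₂ k c
          (by
            intro x x' y
            apply h.iinj
            rw [h.iadd, ← hs x, ← hs x', ← hs y, ← h.qadd, key, key, key, map_add,
              LinearMap.add_apply])
          (by
            intro a x y
            obtain ⟨r, rfl⟩ := h.phi a
            apply h.iinj
            rw [h.ismul, ← hs x, ← hs y, ← h.qsmul, key, key, map_smul,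
              LinearMap.smul_apply])
          (by
            intro x y y'
            apply h.iinj
            rw [h.iadd, ← hs x, ← hs y', ← hs y, ← h.qadd, key, key, key, map_add])
          (by
            intro a x y
            obtain ⟨r, rfl⟩ := h.phi a
            apply h.iinj
            rw [h.ismul, ← hs x, ← hs y, ← h.qsmul, key, key, map_smul])
      refine ⟨c', Subtype.ext ?_⟩
      refine LinearMap.ext fun x => LinearMap.ext fun y => ?_
      rw [hF]
      exact key x y
  refine ⟨Quot.congr (Equiv.ofBijective F hbij) fun c₁ c₂ => ?_⟩
  simp only [Equiv.ofBijective_apply]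
  constructor
  · rintro ⟨A, B, hG, hc⟩
    obtain ⟨α, h1, h2⟩ := h.autos' A B hG
    refine ⟨α, fun x y => ?_⟩
    rw [hF, hF, h1, h1, h2, hc]
  · rintro ⟨α, hα⟩
    obtain ⟨A, B, hG, h1, h2⟩ := h.autos α
    refine ⟨A, B, hG, fun x y => ?_⟩
    obtain ⟨x, rfl⟩ := h.qsurj x
    obtain ⟨y, rfl⟩ := h.qsurj y
    apply h.iinj
    rw [← h2, ← hF, hα, hF, h1, h1]

theorem Pres.equiv {k : Type} [Field k] {t : ℕ} {lam : Fin t → ℕ} {R M : Type} [CommRing R]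
    [AddCommMonoid M] [Module R M] {π : R} {φ : R →+* k} {e : Fin t → M}
    (h : Pres lam π φ e) : Nonempty (Quot (relC k lam) ≃ Quot (relM R M π)) := by
  letI : AddCommGroup M := Module.addCommMonoidToAddCommGroup R
  obtain ⟨q, ι, hq⟩ := Pres.exists_QI h
  exact hq.equiv

theorem Pres.ofPi {k : Type} [Field k] {t : ℕ} {lam : Fin t → ℕ} {R : Type} [CommRing R]
    {N : Fin t → Type} [∀ j, AddCommMonoid (N j)] [∀ j, Module R (N j)] {π : R} {φ : R →+* k}
    (g : ∀ j, N j) (pos : ∀ j, 1 ≤ lam j) (surj : Function.Surjective φ)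
    (ker : ∀ r, φ r = 0 ↔ π ∣ r)
    (span : ∀ j (x : N j), ∃ r : R, x = r • g j)
    (rel : ∀ j (r : R), r • g j = 0 ↔ π ^ lam j ∣ r)
    (cancel : ∀ j m r, m ≤ lam j → π ^ lam j ∣ π ^ m * r → π ^ (lam j - m) ∣ r) :
    Pres (M := ∀ j, N j) lam π φ (fun j => Pi.single j (g j)) := by
  have key : ∀ r : Fin t → R, ∑ j, r j • (Pi.single j (g j) : ∀ j, N j) =
      fun j => r j • g j := by
    intro r
    ext i
    rw [Finset.sum_apply, Finset.sum_eq_single i]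
    · simp
    · intro j _ hj
      simp [Pi.single_eq_of_ne hj.symm]
    · simp
  refine ⟨pos, surj, ker, ?_, ?_, cancel⟩
  · intro x
    choose r hr using fun j => span j (x j)
    exact ⟨r, by rw [key]; ext j; exact hr j⟩
  · intro r
    rw [key, funext_iff]
    exact forall_congr' fun j => rel j (r j)

theorem presU (p t : ℕ) [Fact p.Prime] (lam : Fin t → ℕ) (hpos : ∀ j, 1 ≤ lam j) :
    Pres (M := Umod p t lam) lam (p : ℤ) (Int.castRingHom (ZMod p))
      (fun j => Pi.single j 1) := by
  refine Pres.ofPi (N := fun j => ZMod (p ^ lam j)) (fun j => 1) hpos ?_ ?_ ?_ ?_ ?_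
  · exact ZMod.ringHom_surjective _
  · intro r; exact ZMod.intCast_zmod_eq_zero_iff_dvd r p
  · intro j x
    obtain ⟨r, hr⟩ := ZMod.intCast_surjective x
    exact ⟨r, by simp [hr]⟩
  · intro j r
    rw [zsmul_one]
    have := ZMod.intCast_zmod_eq_zero_iff_dvd r (p ^ lam j)
    simpa using this
  · intro j m r hm hd
    have hp0 : (p : ℤ) ^ m ≠ 0 := pow_ne_zero _ (by exact_mod_cast (Fact.out : p.Prime).ne_zero)
    rw [← Nat.add_sub_cancel' hm, pow_add] at hd
    have := (mul_dvd_mul_iff_left hp0).1 hd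
    simpa using this

theorem presV (p n t : ℕ) [Fact p.Prime] (lam : Fin t → ℕ) (hpos : ∀ j, 1 ≤ lam j)
    (hle : ∀ j, lam j ≤ n) (hn : n ≠ 0) :
    ∃ φ : Rn p n →+* ZMod p, Pres (M := Vmod p n t lam) lam (Tn p n) φ
      (fun j => Pi.single j (Submodule.Quotient.mk 1)) := by
  have hdvd : ∀ m ≤ n, ∀ f : (ZMod p)[X],
      Tn p n ^ m ∣ (Ideal.Quotient.mk _ f : Rn p n) ↔ X ^ m ∣ f := by
    intro m hm f
    constructor
    · rintro ⟨g, hg⟩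
      obtain ⟨g, rfl⟩ := Ideal.Quotient.mk_surjective g
      rw [Tn, ← map_pow, ← map_mul, Ideal.Quotient.eq, Ideal.mem_span_singleton] at hg
      have := ((pow_dvd_pow X hm).trans hg).add (dvd_mul_right (X ^ m) g)
      simpa using this
    · rintro ⟨g, rfl⟩
      rw [map_mul, map_pow]
      exact dvd_mul_right _ _
  let φ : Rn p n →+* ZMod p := Ideal.Quotient.lift _ (constantCoeff (R := ZMod p)) (by
    intro a ha
    rw [Ideal.mem_span_singleton] at ha
    obtain ⟨b, rfl⟩ := ha
    simp [hn.symm])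
  have hφ : ∀ f, φ (Ideal.Quotient.mk _ f) = f.coeff 0 := fun f => by
    simp [φ]
  refine ⟨φ, Pres.ofPi (N := fun j => Rn p n ⧸ Submodule.span (Rn p n) {Tn p n ^ lam j})
    (fun j => Submodule.Quotient.mk 1) hpos ?_ ?_ ?_ ?_ ?_⟩
  · intro a
    exact ⟨Ideal.Quotient.mk _ (C a), by rw [hφ]; simp⟩
  · intro r
    obtain ⟨f, rfl⟩ := Ideal.Quotient.mk_surjective r
    have := hdvd 1 (by omega) f
    rw [pow_one, pow_one] at this
    rw [hφ, this, X_dvd_iff]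
  · intro j x
    obtain ⟨r, rfl⟩ := Submodule.Quotient.mk_surjective _ x
    exact ⟨r, by rw [← Submodule.Quotient.mk_smul, smul_eq_mul, mul_one]⟩
  · intro j r
    rw [← Submodule.Quotient.mk_smul, smul_eq_mul, mul_one, Submodule.Quotient.mk_eq_zero]
    exact Ideal.mem_span_singleton
  · intro j m r hm hd
    obtain ⟨f, rfl⟩ := Ideal.Quotient.mk_surjective r
    have hd : Tn p n ^ lam j ∣ (Ideal.Quotient.mk _ (X ^ m * f) : Rn p n) := by
      rw [map_mul, map_pow]; exact hd
    rw [hdvd _ (hle j)] at hd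
    rw [hdvd _ (by have := hle j; omega)]
    rw [← Nat.add_sub_cancel' hm, pow_add] at hd
    have := (mul_dvd_mul_iff_left (pow_ne_zero m X_ne_zero)).1 hd
    simpa using this

def mulUEquiv (p t : ℕ) (lam : Fin t → ℕ) :
    MulU p t lam ≃ MulM ℤ (Umod p t lam) (p : ℤ) where
  toFun μ := ⟨LinearMap.mk₂ ℤ (fun x y => μ.1 x y) (by intros; simp)
    (by intro c x y; rw [map_zsmul, AddMonoidHom.zsmul_apply])
    (by intros; simp) (by intro c x y; rw [map_zsmul]), fun x y => by
      have := μ.2 x y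
      rw [LinearMap.mk₂_apply, natCast_zsmul, this]⟩
  invFun ν := ⟨AddMonoidHom.mk' (fun x => (ν.1 x).toAddMonoidHom) (by
      intro x y; ext z; simp), fun x y => by
      have := ν.2 x y
      rw [natCast_zsmul] at this
      exact this⟩
  left_inv μ := rfl
  right_inv ν := rfl

/-- For a partition `λ₁ ≥ ⋯ ≥ λ_t` of `n`, there is a bijection between isomorphism classes of
biadditive multiplications on `U` killed by `p` and isomorphism classes of `R_n`-bilinear
multiplications on `V` killed by `T`. -/
theorem mult_correspondence (p n t : ℕ) (hp : p.Prime) (lam : Fin t → ℕ)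
    (hmono : Antitone lam) (hpos : ∀ j, 1 ≤ lam j) (hsum : ∑ j, lam j = n) :
    Nonempty (Quot (relU p t lam) ≃ Quot (relV p n t lam)) := by
  haveI : Fact p.Prime := ⟨hp⟩
  have hle : ∀ j, lam j ≤ n := fun j => hsum ▸
    Finset.single_le_sum (fun _ _ => Nat.zero_le _) (Finset.mem_univ j)
  rcases Nat.eq_zero_or_pos t with rfl | ht
  · haveI : Subsingleton (MulU p 0 lam) :=
      ⟨fun a b => Subtype.ext (by ext x y j; exact j.elim0)⟩
    haveI : Subsingleton (MulV p n 0 lam) :=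
      ⟨fun a b => Subtype.ext (LinearMap.ext fun x => LinearMap.ext fun y =>
        funext fun j => j.elim0)⟩
    have s1 : Subsingleton (Quot (relU p 0 lam)) := inferInstance
    have s2 : Subsingleton (Quot (relV p n 0 lam)) := inferInstance
    exact ⟨{ toFun := fun _ => Quot.mk _ ⟨0, fun x y => funext fun j => j.elim0⟩
             invFun := fun _ => Quot.mk _ ⟨0, fun x y => funext fun j => j.elim0⟩
             left_inv := fun _ => Subsingleton.elim _ _
             right_inv := fun _ => Subsingleton.elim _ _ }⟩
  · have hn : n ≠ 0 := by
      have := hle ⟨0, ht⟩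
      have := hpos ⟨0, ht⟩
      omega
    obtain ⟨φ, hV⟩ := presV p n t lam hpos hle hn
    obtain ⟨EU⟩ := (presU p t lam hpos).equiv
    obtain ⟨EV⟩ := hV.equiv
    have E0 : Quot (relU p t lam) ≃ Quot (relM ℤ (Umod p t lam) (p : ℤ)) := by
      refine Quot.congr (mulUEquiv p t lam) fun μ₁ μ₂ => ?_
      constructor
      · rintro ⟨α, hα⟩
        exact ⟨α.toIntLinearEquiv, hα⟩
      · rintro ⟨α, hα⟩
        exact ⟨α.toAddEquiv, hα⟩
    exact ⟨E0.trans (EU.symm.trans EV)⟩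
end

section
/- Let p be a prime, λ_1 ≥ ⋯ ≥ λ_t ≥ 1 integers, and U = ℤ/p^{λ_1}ℤ ⊕ ⋯ ⊕ ℤ/p^{λ_t}ℤ with standard generators u_1,…,u_t. Suppose E, F ∈ GL_t(ℤ/pℤ) satisfy: E_{ij} = 0 whenever λ_j < λ_i; F_{ij} = 0 whenever λ_j > λ_i; and E_{ij} = F_{ij} whenever λ_i = λ_j. Then there exists an additive automorphism π of U such that the matrix of π|_{Ω₁(U)} with respect to the basis (p^{λ_i−1}u_i) of Ω₁(U) is E, and the matrix of the induced automorphism of Ū = U/pU with respect to the basis (ū_i) is F. -/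
open Matrix

/-- The standard generator `uᵢ` of the `i`-th summand of `U`. -/
def uGen (p t : ℕ) (lam : Fin t → ℕ) (i : Fin t) : Umod p t lam :=
  Pi.single i (1 : ZMod (p ^ lam i))

theorem exists_hom_aux (p t : ℕ) (lam : Fin t → ℕ) (v : Fin t → Umod p t lam)
    (hv : ∀ i, p ^ lam i • v i = 0) :
    ∃ f : Umod p t lam →+ Umod p t lam, ∀ i, f (uGen p t lam i) = v i := by
  have h : ∀ i, (zmultiplesHom (Umod p t lam) (v i)) ((p ^ lam i : ℕ) : ℤ) = 0 := by
    intro i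
    rw [zmultiplesHom_apply, natCast_zsmul, hv]
  refine ⟨∑ i, (ZMod.lift (p ^ lam i) ⟨zmultiplesHom _ (v i), h i⟩).comp
    (Pi.evalAddMonoidHom (fun j : Fin t => ZMod (p ^ lam j)) i), fun i => ?_⟩
  rw [AddMonoidHom.finsetSum_apply, Finset.sum_eq_single i]
  · have := ZMod.lift_coe (p ^ lam i) ⟨zmultiplesHom _ (v i), h i⟩ 1
    simpa [uGen] using this
  · intro j _ hj
    simp [uGen, Pi.single_eq_of_ne hj]
  · simp

theorem nsmul_uGen_zero (p t : ℕ) (lam : Fin t → ℕ) (j : Fin t) (n : ℕ) (h : lam j ≤ n) :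
    p ^ n • uGen p t lam j = 0 := by
  rw [uGen, ← Pi.single_smul, nsmul_one]
  rw [(ZMod.natCast_eq_zero_iff _ _).2 (pow_dvd_pow p h), Pi.single_zero]

theorem surj_aux (p t : ℕ) (hp : p.Prime) (lam : Fin t → ℕ)
    (F : GL (Fin t) (ZMod p)) (f : Umod p t lam →+ Umod p t lam)
    (hf : ∀ i, ∃ y : Umod p t lam,
        f (uGen p t lam i) -
          ∑ j, ((F : Matrix (Fin t) (Fin t) (ZMod p)) i j).val • uGen p t lam j = p • y) :
    Function.Surjective f := by
  haveI : Fact p.Prime := ⟨hp⟩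
  haveI : ∀ j, NeZero (p ^ lam j) := fun j => ⟨pow_ne_zero _ hp.ne_zero⟩
  let S : AddSubgroup (Umod p t lam) := f.range ⊔ (nsmulAddMonoidHom p).range
  have hpS : ∀ y, p • y ∈ S := fun y => AddSubgroup.mem_sup_right ⟨y, rfl⟩
  have hfS : ∀ y, f y ∈ S := fun y => AddSubgroup.mem_sup_left ⟨y, rfl⟩
  have hQ : ∀ q : Umod p t lam ⧸ S, p • q = 0 := by
    intro q
    obtain ⟨y, rfl⟩ := QuotientAddGroup.mk'_surjective S q
    rw [← map_nsmul]
    exact (QuotientAddGroup.eq_zero_iff _).2 (hpS y)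
  letI : Module (ZMod p) (Umod p t lam ⧸ S) := AddCommGroup.zmodModule hQ
  let q : Fin t → Umod p t lam ⧸ S := fun i => QuotientAddGroup.mk' S (uGen p t lam i)
  have hvs : ∀ (a : ZMod p) (x : Umod p t lam ⧸ S), a.val • x = a • x := by
    intro a x
    rw [← Nat.cast_smul_eq_nsmul (ZMod p), ZMod.natCast_zmod_val]
  have h1 : ∀ i, ∑ j, (F : Matrix (Fin t) (Fin t) (ZMod p)) i j • q j = 0 := by
    intro i
    obtain ⟨y, hy⟩ := hf i
    have h2 : ∑ j, ((F : Matrix (Fin t) (Fin t) (ZMod p)) i j).val • uGen p t lam j ∈ S := by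
      have : ∑ j, ((F : Matrix (Fin t) (Fin t) (ZMod p)) i j).val • uGen p t lam j
          = f (uGen p t lam i) - p • y := by rw [← hy]; abel
      rw [this]
      exact S.sub_mem (hfS _) (hpS _)
    have h3 := (QuotientAddGroup.eq_zero_iff _).2 h2
    rw [← QuotientAddGroup.mk'_apply, map_sum] at h3
    rw [← h3]
    refine Finset.sum_congr rfl fun j _ => ?_
    rw [map_nsmul, hvs]
  have hq : ∀ i, q i = 0 := by
    intro i
    have e : ∑ j, ((F⁻¹ : GL (Fin t) (ZMod p)) : Matrix (Fin t) (Fin t) (ZMod p)) i j •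
        ∑ k, (F : Matrix (Fin t) (Fin t) (ZMod p)) j k • q k = 0 := by simp [h1]
    simp_rw [Finset.smul_sum, smul_smul] at e
    rw [Finset.sum_comm] at e
    simp_rw [← Finset.sum_smul, ← Matrix.mul_apply] at e
    rw [← Units.val_mul, inv_mul_cancel] at e
    simpa [Matrix.one_apply] using e
  have hS : ∀ x, x ∈ S := by
    intro x
    have hx : x = ∑ i, (x i).val • uGen p t lam i := by
      conv_lhs => rw [← Finset.univ_sum_single x]
      refine Finset.sum_congr rfl fun i _ => ?_
      rw [uGen, ← Pi.single_smul, nsmul_one, ZMod.natCast_zmod_val]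
    rw [hx]
    exact S.sum_mem fun i _ => S.nsmul_mem ((QuotientAddGroup.eq_zero_iff _).1 (hq i)) _
  have key : ∀ n : ℕ, ∀ x, ∃ a y, x = f a + p ^ n • y := by
    intro n
    induction n with
    | zero => exact fun x => ⟨0, x, by simp⟩
    | succ n ih =>
      intro x
      obtain ⟨a, y, h⟩ := ih x
      obtain ⟨_, ⟨b, rfl⟩, _, ⟨z, rfl⟩, hz⟩ := AddSubgroup.mem_sup.1 (hS y)
      refine ⟨a + p ^ n • b, z, ?_⟩
      rw [h, ← hz]
      simp only [nsmulAddMonoidHom_apply, map_add, map_nsmul, smul_add, pow_succ, mul_smul]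
      abel
  intro x
  obtain ⟨a, y, h⟩ := key (∑ j, lam j) x
  refine ⟨a, ?_⟩
  have : p ^ (∑ j, lam j) • y = 0 := by
    funext j
    rw [Pi.smul_apply, nsmul_eq_mul, (ZMod.natCast_eq_zero_iff _ _).2
      (pow_dvd_pow p (Finset.single_le_sum (fun _ _ => Nat.zero_le _) (Finset.mem_univ j))),
      zero_mul, Pi.zero_apply]
  rw [h, this, add_zero]

/-- Given `E, F ∈ GL_t(ℤ/pℤ)` with `Eᵢⱼ = 0` when `λⱼ < λᵢ`, `Fᵢⱼ = 0` when `λⱼ > λᵢ` and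
`Eᵢⱼ = Fᵢⱼ` when `λᵢ = λⱼ`, there is an additive automorphism `π` of `U = ⊕ᵢ ℤ/p^{λᵢ}ℤ`
whose restriction to `Ω₁(U)` has matrix `E` in the basis `(p^{λᵢ−1} uᵢ)` and whose induced
automorphism of `U/pU` has matrix `F` in the basis `(ūᵢ)`. -/
theorem matrix_lift (p t : ℕ) (hp : p.Prime) (lam : Fin t → ℕ)
    (hmono : Antitone lam) (hpos : ∀ j, 1 ≤ lam j)
    (E F : GL (Fin t) (ZMod p))
    (hE : ∀ i j, lam j < lam i → (E : Matrix (Fin t) (Fin t) (ZMod p)) i j = 0)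
    (hF : ∀ i j, lam i < lam j → (F : Matrix (Fin t) (Fin t) (ZMod p)) i j = 0)
    (hEF : ∀ i j, lam i = lam j → (E : Matrix (Fin t) (Fin t) (ZMod p)) i j =
      (F : Matrix (Fin t) (Fin t) (ZMod p)) i j) :
    ∃ π : Umod p t lam ≃+ Umod p t lam,
      (∀ i, π (p ^ (lam i - 1) • uGen p t lam i) =
        ∑ j, ((E : Matrix (Fin t) (Fin t) (ZMod p)) i j).val •
          (p ^ (lam j - 1) • uGen p t lam j)) ∧
      (∀ i, ∃ y : Umod p t lam,
        π (uGen p t lam i) -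
          ∑ j, ((F : Matrix (Fin t) (Fin t) (ZMod p)) i j).val • uGen p t lam j = p • y) := by
  haveI : ∀ j, NeZero (p ^ lam j) := fun j => ⟨pow_ne_zero _ hp.ne_zero⟩
  let A : Fin t → Fin t → ℕ := fun i j =>
    if lam i < lam j then ((E : Matrix (Fin t) (Fin t) (ZMod p)) i j).val * p ^ (lam j - lam i)
    else ((F : Matrix (Fin t) (Fin t) (ZMod p)) i j).val
  obtain ⟨f, hf⟩ := exists_hom_aux p t lam (fun i => ∑ j, A i j • uGen p t lam j) (by
    intro i
    rw [Finset.smul_sum]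
    refine Finset.sum_eq_zero fun j _ => ?_
    simp only [A]
    split_ifs with h
    · rw [smul_smul, mul_left_comm, ← pow_add, mul_smul, nsmul_uGen_zero _ _ _ _ _ (by omega),
        smul_zero]
    · rw [smul_comm, nsmul_uGen_zero _ _ _ _ _ (by omega), smul_zero])
  have h2 : ∀ i, ∃ y : Umod p t lam,
        f (uGen p t lam i) -
          ∑ j, ((F : Matrix (Fin t) (Fin t) (ZMod p)) i j).val • uGen p t lam j = p • y := by
    intro i
    refine ⟨∑ j, if lam i < lam j then
      (((E : Matrix (Fin t) (Fin t) (ZMod p)) i j).val * p ^ (lam j - lam i - 1)) •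
        uGen p t lam j else 0, ?_⟩
    rw [hf, ← Finset.sum_sub_distrib, Finset.smul_sum]
    refine Finset.sum_congr rfl fun j _ => ?_
    simp only [A]
    split_ifs with h
    · rw [hF i j h, ZMod.val_zero, zero_smul, sub_zero, smul_smul, mul_left_comm, ← pow_succ']
      congr 3
      omega
    · simp
  have hs := surj_aux p t hp lam F f h2
  refine ⟨AddEquiv.ofBijective f ⟨Finite.injective_iff_surjective.2 hs, hs⟩, fun i => ?_, h2⟩
  change f (p ^ (lam i - 1) • uGen p t lam i) = _
  rw [map_nsmul, hf, Finset.smul_sum]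
  refine Finset.sum_congr rfl fun j _ => ?_
  have hi := hpos i
  have hj := hpos j
  simp only [A]
  split_ifs with h
  · rw [smul_smul, smul_smul, mul_left_comm, ← pow_add]
    congr 3
    omega
  · rcases (not_lt.1 h).lt_or_eq with h' | h'
    · rw [hE i j h', ZMod.val_zero, zero_smul, smul_comm,
        nsmul_uGen_zero _ _ _ _ _ (by omega), smul_zero]
    · rw [hEF i j h'.symm, h', smul_comm]
end
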